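/- In the algebra SLF(Ū_q) with convolution product, for every 1 ≤ s ≤ p−1 one has χ^−_1 G_s = −G_{p−s}. -/

import Mathlib

noncomputable section

open scoped TensorProduct

namespace Uqsl2

/-- Generators of the restricted quantum group. -/
inductive gen : Type | E | F | K | Kinv

/-- The primitive `2p`-th root of unity `q = e^{iπ/p}`. -/
def q (p : ℕ) : ℂ := Complex.exp (Real.pi * Complex.I / p)

/-- The `q`-integer `[n] = (q^n - q^{-n})/(q - q^{-1})`. -/
def qi (p : ℕ) (n : ℤ) : ℂ := (q p ^ n - q p ^ (-n)) / (q p - (q p)⁻¹)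

/-- The `q`-factorial `[m]!`. -/
def qfact (p m : ℕ) : ℂ := ∏ i ∈ Finset.range m, qi p (i + 1)

open FreeAlgebra in
/-- The defining relations of `Ū_q(sl₂)`. -/
inductive rel (p : ℕ) : FreeAlgebra ℂ gen → FreeAlgebra ℂ gen → Prop
  | KKinv : rel p (ι ℂ gen.K * ι ℂ gen.Kinv) 1
  | KinvK : rel p (ι ℂ gen.Kinv * ι ℂ gen.K) 1
  | Ep : rel p (ι ℂ gen.E ^ p) 0
  | Fp : rel p (ι ℂ gen.F ^ p) 0
  | K2p : rel p (ι ℂ gen.K ^ (2 * p)) 1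
  | KE : rel p (ι ℂ gen.K * ι ℂ gen.E) (q p ^ 2 • (ι ℂ gen.E * ι ℂ gen.K))
  | KF : rel p (ι ℂ gen.K * ι ℂ gen.F) ((q p ^ 2)⁻¹ • (ι ℂ gen.F * ι ℂ gen.K))
  | EF : rel p (ι ℂ gen.E * ι ℂ gen.F - ι ℂ gen.F * ι ℂ gen.E)
             ((q p - (q p)⁻¹)⁻¹ • (ι ℂ gen.K - ι ℂ gen.Kinv))

/-- The restricted quantum group `Ū_q(sl₂)`, presented by generators and relations. -/
abbrev Uq (p : ℕ) := RingQuot (rel p)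

def EE (p : ℕ) : Uq p := RingQuot.mkAlgHom ℂ (rel p) (FreeAlgebra.ι ℂ gen.E)
def FF (p : ℕ) : Uq p := RingQuot.mkAlgHom ℂ (rel p) (FreeAlgebra.ι ℂ gen.F)
def KK (p : ℕ) : Uq p := RingQuot.mkAlgHom ℂ (rel p) (FreeAlgebra.ι ℂ gen.K)
def KKinv (p : ℕ) : Uq p := RingQuot.mkAlgHom ℂ (rel p) (FreeAlgebra.ι ℂ gen.Kinv)

/-! ### The simple modules `X^α(s)` as matrix representations -/

/-- Matrix of `K` on `X^α(s)` in the canonical basis. -/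
def XK (p : ℕ) (α : ℂ) (s : ℕ) : Matrix (Fin s) (Fin s) ℂ :=
  Matrix.diagonal fun i => α * q p ^ ((s : ℤ) - 1 - 2 * (i : ℕ))

/-- Matrix of `E` on `X^α(s)` in the canonical basis. -/
def XE (p : ℕ) (α : ℂ) (s : ℕ) : Matrix (Fin s) (Fin s) ℂ :=
  Matrix.of fun i j =>
    if (i : ℕ) + 1 = (j : ℕ) then α * qi p (j : ℕ) * qi p ((s : ℤ) - (j : ℕ)) else 0

/-- Matrix of `F` on `X^α(s)` in the canonical basis. -/
def XF (s : ℕ) : Matrix (Fin s) (Fin s) ℂ :=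
  Matrix.of fun i j => if (i : ℕ) = (j : ℕ) + 1 then (1 : ℂ) else 0

/-- The statement that `ρX α s` is the representation on `X^α(s)` for the relevant
values of `α` and `s`. -/
def IsXRep (p : ℕ) (ρX : (α : ℂ) → (s : ℕ) → (Uq p →ₐ[ℂ] Matrix (Fin s) (Fin s) ℂ)) : Prop :=
  ∀ α : ℂ, (α = 1 ∨ α = -1) → ∀ s : ℕ, 1 ≤ s → s ≤ p →
    ρX α s (KK p) = XK p α s ∧ ρX α s (EE p) = XE p α s ∧ ρX α s (FF p) = XF s

/-! ### The projective modules `P^α(s)` as matrix representations -/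

/-- Index for the standard basis `(b_i, x_j, y_k, a_l)` of `P^α(s)`. -/
abbrev PIdx (p s : ℕ) := Fin s ⊕ (Fin (p - s) ⊕ (Fin (p - s) ⊕ Fin s))

/-- Diagonal of the matrix of `K` on `P^α(s)`. -/
def PKdiag (p : ℕ) (α : ℂ) (s : ℕ) : PIdx p s → ℂ
  | .inl i => α * q p ^ ((s : ℤ) - 1 - 2 * (i : ℕ))
  | .inr (.inl j) => -α * q p ^ ((p : ℤ) - s - 1 - 2 * (j : ℕ))
  | .inr (.inr (.inl k)) => -α * q p ^ ((p : ℤ) - s - 1 - 2 * (k : ℕ))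
  | .inr (.inr (.inr l)) => α * q p ^ ((s : ℤ) - 1 - 2 * (l : ℕ))

/-- Matrix of `K` on `P^α(s)` in the standard basis. -/
def PK (p : ℕ) (α : ℂ) (s : ℕ) : Matrix (PIdx p s) (PIdx p s) ℂ :=
  Matrix.diagonal (PKdiag p α s)

/-- Matrix of `E` on `P^α(s)` in the standard basis. -/
def PE (p : ℕ) (α : ℂ) (s : ℕ) : Matrix (PIdx p s) (PIdx p s) ℂ :=
  Matrix.of fun i j =>
    match i, j with
    | .inl i, .inl j =>
        if (i : ℕ) + 1 = (j : ℕ) then α * qi p (j : ℕ) * qi p ((s : ℤ) - (j : ℕ)) else 0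
    | .inr (.inl jx), .inl j => if (j : ℕ) = 0 ∧ (jx : ℕ) + 1 = p - s then 1 else 0
    | .inr (.inr (.inr l)), .inl j => if (l : ℕ) + 1 = (j : ℕ) then 1 else 0
    | .inr (.inl i), .inr (.inl j) =>
        if (i : ℕ) + 1 = (j : ℕ) then -α * qi p (j : ℕ) * qi p ((p : ℤ) - s - (j : ℕ)) else 0
    | .inr (.inr (.inl i)), .inr (.inr (.inl k)) =>
        if (i : ℕ) + 1 = (k : ℕ) then -α * qi p (k : ℕ) * qi p ((p : ℤ) - s - (k : ℕ)) else 0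
    | .inr (.inr (.inr l)), .inr (.inr (.inl k)) =>
        if (k : ℕ) = 0 ∧ (l : ℕ) + 1 = s then 1 else 0
    | .inr (.inr (.inr i)), .inr (.inr (.inr l)) =>
        if (i : ℕ) + 1 = (l : ℕ) then α * qi p (l : ℕ) * qi p ((s : ℤ) - (l : ℕ)) else 0
    | _, _ => 0

/-- Matrix of `F` on `P^α(s)` in the standard basis. -/
def PF (p s : ℕ) : Matrix (PIdx p s) (PIdx p s) ℂ :=
  Matrix.of fun i j =>
    match i, j with
    | .inl i, .inl j => if (i : ℕ) = (j : ℕ) + 1 then (1 : ℂ) else 0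
    | .inr (.inr (.inl k)), .inl j => if (j : ℕ) + 1 = s ∧ (k : ℕ) = 0 then 1 else 0
    | .inr (.inl i), .inr (.inl j) => if (i : ℕ) = (j : ℕ) + 1 then 1 else 0
    | .inr (.inr (.inr l)), .inr (.inl j) => if (j : ℕ) + 1 = p - s ∧ (l : ℕ) = 0 then 1 else 0
    | .inr (.inr (.inl i)), .inr (.inr (.inl k)) => if (i : ℕ) = (k : ℕ) + 1 then 1 else 0
    | .inr (.inr (.inr i)), .inr (.inr (.inr l)) => if (i : ℕ) = (l : ℕ) + 1 then 1 else 0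
    | _, _ => 0

/-- The statement that `ρP α s` is the representation on `P^α(s)` for the relevant
values of `α` and `s`. -/
def IsPRep (p : ℕ)
    (ρP : (α : ℂ) → (s : ℕ) → (Uq p →ₐ[ℂ] Matrix (PIdx p s) (PIdx p s) ℂ)) : Prop :=
  ∀ α : ℂ, (α = 1 ∨ α = -1) → ∀ s : ℕ, 1 ≤ s → s ≤ p - 1 →
    ρP α s (KK p) = PK p α s ∧ ρP α s (EE p) = PE p α s ∧ ρP α s (FF p) = PF p s

/-! ### Symmetric linear forms, characters, and the forms `G_s` -/

/-- Symmetric linear forms. -/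
def IsSLF (p : ℕ) (φ : Uq p →ₗ[ℂ] ℂ) : Prop := ∀ x y : Uq p, φ (x * y) = φ (y * x)

/-- The character of a matrix representation. -/
def chiOf (p : ℕ) {n : Type} [Fintype n] [DecidableEq n]
    (ρ : Uq p →ₐ[ℂ] Matrix n n ℂ) : Uq p →ₗ[ℂ] ℂ :=
  (Matrix.traceLinearMap n ℂ ℂ).comp ρ.toLinearMap

/-- The matrix entry functional. -/
def entry {n : Type} (i j : n) : Matrix n n ℂ →ₗ[ℂ] ℂ where
  toFun M := M i j
  map_add' _ _ := rfl
  map_smul' _ _ := rfl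

/-- The symmetric linear form `G_s = tr H^+_s + tr H^-_{p-s}`. -/
def GOf (p : ℕ)
    (ρP : (α : ℂ) → (s : ℕ) → (Uq p →ₐ[ℂ] Matrix (PIdx p s) (PIdx p s) ℂ))
    (s : ℕ) : Uq p →ₗ[ℂ] ℂ :=
  (∑ i : Fin s,
    (entry (Sum.inr (Sum.inr (Sum.inr i))) (Sum.inl i)).comp (ρP 1 s).toLinearMap) +
  (∑ j : Fin (p - s),
    (entry (Sum.inr (Sum.inr (Sum.inr j))) (Sum.inl j)).comp (ρP (-1) (p - s)).toLinearMap)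

/-! ### Convolution product -/

/-- The convolution product of two linear forms, with respect to a comultiplication `Δ`. -/
def conv (p : ℕ) (Δ : Uq p →ₐ[ℂ] (Uq p ⊗[ℂ] Uq p)) (φ ψ : Uq p →ₗ[ℂ] ℂ) :
    Uq p →ₗ[ℂ] ℂ :=
  (LinearMap.mul' ℂ ℂ).comp ((TensorProduct.map φ ψ).comp Δ.toLinearMap)

/-- The statement that `Δ` is the comultiplication of `Ū_q(sl₂)`. -/
def IsCoprod (p : ℕ) (Δ : Uq p →ₐ[ℂ] (Uq p ⊗[ℂ] Uq p)) : Prop :=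
  Δ (EE p) = 1 ⊗ₜ[ℂ] EE p + EE p ⊗ₜ[ℂ] KK p ∧
  Δ (FF p) = FF p ⊗ₜ[ℂ] 1 + KKinv p ⊗ₜ[ℂ] FF p ∧
  Δ (KK p) = KK p ⊗ₜ[ℂ] KK p ∧
  Δ (KKinv p) = KKinv p ⊗ₜ[ℂ] KKinv p


/-!
A one-dimensional representation `χ` is an algebra homomorphism to `ℂ`, and `χ ψ = ψ ∘ σ`, where
`σ u = ∑ χ(u') u''`. For `χ = χ^-_1` the endomorphism `σ` fixes `E` and negates `F` and `K`.
Pulling `P^α(s)` back along `σ` gives `P^{-α}(s)`, through a rescaling of the standard basis by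
signs: the signs alternate along the action of `F` and are preserved by the coefficients `1` of
`E`. Since `E b_i` has an `a_{i-1}` component, `b_i` and `a_i` get opposite signs, so
`tr H^α_s ∘ σ = -tr H^{-α}_s`; the two summands of `G_s` become those of `-G_{p-s}`.
-/

theorem semiconjBy_diagonal_iff {n R : Type*} [Fintype n] [DecidableEq n] [Semiring R]
    {d : n → R} {M N : Matrix n n R} :
    SemiconjBy (Matrix.diagonal d) M N ↔ ∀ i j, d i * M i j = N i j * d j := by
  simp only [SemiconjBy, ← Matrix.ext_iff, Matrix.diagonal_mul, Matrix.mul_diagonal]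

section Winding

variable {R A : Type*} [CommSemiring R] [Semiring A] [Algebra R A]

/-- The left winding endomorphism `u ↦ ∑ χ(u') u''` of an algebra with comultiplication `Δ`,
attached to a one-dimensional representation `χ`. -/
def leftWinding (Δ : A →ₐ[R] A ⊗[R] A) (χ : A →ₐ[R] R) : A →ₐ[R] A :=
  ((Algebra.TensorProduct.lid R A).toAlgHom.comp
    (Algebra.TensorProduct.map χ (AlgHom.id R A))).comp Δ

theorem leftWinding_apply (Δ : A →ₐ[R] A ⊗[R] A) (χ : A →ₐ[R] R) (u : A) :
    leftWinding Δ χ u =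
      Algebra.TensorProduct.lid R A (Algebra.TensorProduct.map χ (AlgHom.id R A) (Δ u)) :=
  rfl

theorem leftWinding_of_groupLike {Δ : A →ₐ[R] A ⊗[R] A} {g : A} (hg : Δ g = g ⊗ₜ[R] g)
    (χ : A →ₐ[R] R) : leftWinding Δ χ g = χ g • g := by
  simp [leftWinding_apply, hg]

theorem leftWinding_of_skewPrimitive {Δ : A →ₐ[R] A ⊗[R] A} {x g h : A}
    (hx : Δ x = x ⊗ₜ[R] g + h ⊗ₜ[R] x) {χ : A →ₐ[R] R} (hχ : χ x = 0) :
    leftWinding Δ χ x = χ h • x := by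
  simp [leftWinding_apply, hx, hχ]

end Winding

section Convolution

variable {p : ℕ}

theorem conv_algHom (Δ : Uq p →ₐ[ℂ] Uq p ⊗[ℂ] Uq p) (χ : Uq p →ₐ[ℂ] ℂ) (ψ : Uq p →ₗ[ℂ] ℂ) :
    conv p Δ χ.toLinearMap ψ = ψ ∘ₗ (leftWinding Δ χ).toLinearMap := by
  have h : LinearMap.mul' ℂ ℂ ∘ₗ TensorProduct.map χ.toLinearMap ψ =
      ψ ∘ₗ ((Algebra.TensorProduct.lid ℂ (Uq p)).toAlgHom.comp
        (Algebra.TensorProduct.map χ (AlgHom.id ℂ (Uq p)))).toLinearMap := by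
    ext x y
    simp
  exact congrArg (· ∘ₗ Δ.toLinearMap) h

/-- The character of a one-dimensional representation, as an algebra homomorphism. -/
def charAlgHom {n : Type} [Fintype n] [DecidableEq n] [Unique n]
    (ρ : Uq p →ₐ[ℂ] Matrix n n ℂ) : Uq p →ₐ[ℂ] ℂ :=
  AlgHom.ofLinearMap (chiOf p ρ) (by simp [chiOf])
    (by simp [chiOf, Matrix.trace, Matrix.mul_apply])

theorem charAlgHom_toLinearMap {n : Type} [Fintype n] [DecidableEq n] [Unique n]
    (ρ : Uq p →ₐ[ℂ] Matrix n n ℂ) : (charAlgHom ρ).toLinearMap = chiOf p ρ :=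
  rfl

theorem charAlgHom_apply {n : Type} [Fintype n] [DecidableEq n] [Unique n]
    (ρ : Uq p →ₐ[ℂ] Matrix n n ℂ) (u : Uq p) : charAlgHom ρ u = ρ u default default := by
  simp [charAlgHom, chiOf, Matrix.trace]

end Convolution

section Generators

variable {p : ℕ}

/-- The generator `K` as a unit. -/
def unitK (p : ℕ) : (Uq p)ˣ where
  val := KK p
  inv := KKinv p
  val_inv := by rw [KK, KKinv, ← map_mul, RingQuot.mkAlgHom_rel ℂ rel.KKinv, map_one]
  inv_val := by rw [KK, KKinv, ← map_mul, RingQuot.mkAlgHom_rel ℂ rel.KinvK, map_one]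

theorem map_KKinv_eq_neg_one {A : Type*} [Ring A] [Algebra ℂ A] {f : Uq p →ₐ[ℂ] A}
    (hK : f (KK p) = -1) : f (KKinv p) = -1 := by
  have h : f (KK p) * f (KKinv p) = 1 := by
    rw [← map_mul, show KK p * KKinv p = 1 from (unitK p).mul_inv, map_one]
  rwa [hK, neg_one_mul, neg_eq_iff_eq_neg] at h

theorem semiconjBy_of_generators {A : Type*} [Semiring A] [Algebra ℂ A] {f g : Uq p →ₐ[ℂ] A}
    {a : A} (hE : SemiconjBy a (f (EE p)) (g (EE p))) (hF : SemiconjBy a (f (FF p)) (g (FF p)))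
    (hK : SemiconjBy a (f (KK p)) (g (KK p))) (u : Uq p) : SemiconjBy a (f u) (g u) := by
  obtain ⟨w, rfl⟩ := RingQuot.mkAlgHom_surjective ℂ (rel p) u
  induction w using FreeAlgebra.induction with
  | grade0 r =>
    simp only [AlgHom.commutes]
    exact (Algebra.commutes r a).symm
  | grade1 x =>
    cases x with
    | E => exact hE
    | F => exact hF
    | K => exact hK
    | Kinv =>
      exact SemiconjBy.units_inv_right (x := Units.map (f : Uq p →* A) (unitK p))
        (y := Units.map (g : Uq p →* A) (unitK p)) hK
  | mul v w hv hw => simpa only [map_mul] using hv.mul_right hw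
  | add v w hv hw => simpa only [map_add] using hv.add_right hw

/-- The endomorphisms of `Ū_q` given by `E ↦ E`, `F ↦ -F`, `K ↦ -K`; the left winding endomorphism
of `X^-(1)` is one. -/
structure IsSignTwist (σ : Uq p →ₐ[ℂ] Uq p) : Prop where
  map_EE : σ (EE p) = EE p
  map_FF : σ (FF p) = -FF p
  map_KK : σ (KK p) = -KK p

theorem isSignTwist_leftWinding {Δ : Uq p →ₐ[ℂ] Uq p ⊗[ℂ] Uq p} (hΔ : IsCoprod p Δ)
    {χ : Uq p →ₐ[ℂ] ℂ} (hE : χ (EE p) = 0) (hF : χ (FF p) = 0) (hK : χ (KK p) = -1) :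
    IsSignTwist (leftWinding Δ χ) := by
  obtain ⟨hΔE, hΔF, hΔK, -⟩ := hΔ
  have hKinv : χ (KKinv p) = -1 := map_KKinv_eq_neg_one hK
  refine ⟨?_, ?_, ?_⟩
  · rw [leftWinding_of_skewPrimitive (hΔE.trans (add_comm _ _)) hE, map_one, one_smul]
  · rw [leftWinding_of_skewPrimitive hΔF hF, hKinv]
    exact neg_one_smul ℂ (FF p)
  · rw [leftWinding_of_groupLike hΔK, hK]
    exact neg_one_smul ℂ (KK p)

end Generators

section Projective

variable {p s : ℕ}

/-- The signs by which the standard basis of `P^{-α}(s)` is rescaled to give that of the twist of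
`P^α(s)`. -/
def basisSign (p s : ℕ) : PIdx p s → ℂ
  | .inl i => (-1) ^ (i : ℕ)
  | .inr (.inl j) => (-1) ^ (p - s + 1 + (j : ℕ))
  | .inr (.inr (.inl k)) => (-1) ^ (s + (k : ℕ))
  | .inr (.inr (.inr l)) => (-1) ^ ((l : ℕ) + 1)

theorem basisSign_b_first {i : Fin s} (hi : (i : ℕ) = 0) : basisSign p s (Sum.inl i) = 1 := by
  simp [basisSign, hi]

theorem basisSign_a_first {l : Fin s} (hl : (l : ℕ) = 0) :
    basisSign p s (Sum.inr (Sum.inr (Sum.inr l))) = -1 := by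
  simp [basisSign, hl]

theorem basisSign_x_last {j : Fin (p - s)} (hj : (j : ℕ) + 1 = p - s) :
    basisSign p s (Sum.inr (Sum.inl j)) = 1 :=
  Even.neg_one_pow ⟨(j : ℕ) + 1, by lia⟩

theorem semiconjBy_basisSign_PK (α : ℂ) :
    SemiconjBy (Matrix.diagonal (basisSign p s)) (PK p (-α) s) (-PK p α s) := by
  have h : PK p (-α) s = -PK p α s := by
    rw [PK, PK, Matrix.diagonal_neg]
    congr 1
    ext (i | j | k | l) <;> simp [PKdiag]
  rw [h]
  exact SemiconjBy.neg_right (Matrix.commute_diagonal _ _)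

theorem semiconjBy_basisSign_PE (α : ℂ) :
    SemiconjBy (Matrix.diagonal (basisSign p s)) (PE p (-α) s) (PE p α s) := by
  rw [semiconjBy_diagonal_iff]
  rintro (i | i | i | i) (j | j | j | j) <;>
    simp only [PE, Matrix.of_apply, zero_mul, mul_zero] <;>
    split_ifs with h <;>
    grind [basisSign, basisSign_x_last, basisSign_b_first]

theorem semiconjBy_basisSign_PF :
    SemiconjBy (Matrix.diagonal (basisSign p s)) (PF p s) (-PF p s) := by
  rw [semiconjBy_diagonal_iff]
  rintro (i | i | i | i) (j | j | j | j) <;>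
    simp only [PF, Matrix.neg_apply, Matrix.of_apply, zero_mul, mul_zero, neg_zero] <;>
    split_ifs with h <;>
    grind [basisSign, basisSign_x_last, basisSign_a_first]

/-- `ρ` is the matrix representation of `Ū_q` on `P^α(s)` in its standard basis. -/
structure IsProjectiveRep (α : ℂ) (ρ : Uq p →ₐ[ℂ] Matrix (PIdx p s) (PIdx p s) ℂ) : Prop where
  map_KK : ρ (KK p) = PK p α s
  map_EE : ρ (EE p) = PE p α s
  map_FF : ρ (FF p) = PF p s

theorem IsPRep.isProjectiveRep
    {ρP : (α : ℂ) → (s : ℕ) → (Uq p →ₐ[ℂ] Matrix (PIdx p s) (PIdx p s) ℂ)} (hP : IsPRep p ρP)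
    {α : ℂ} (hα : α = 1 ∨ α = -1) (h1 : 1 ≤ s) (hs : s ≤ p - 1) : IsProjectiveRep α (ρP α s) := by
  obtain ⟨hK, hE, hF⟩ := hP α hα s h1 hs
  exact ⟨hK, hE, hF⟩

theorem IsProjectiveRep.semiconjBy_signTwist {α : ℂ}
    {ρ ρ' : Uq p →ₐ[ℂ] Matrix (PIdx p s) (PIdx p s) ℂ} (hρ : IsProjectiveRep α ρ)
    (hρ' : IsProjectiveRep (-α) ρ') {σ : Uq p →ₐ[ℂ] Uq p} (hσ : IsSignTwist σ) (u : Uq p) :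
    SemiconjBy (Matrix.diagonal (basisSign p s)) (ρ' u) (ρ (σ u)) := by
  refine semiconjBy_of_generators (g := ρ.comp σ) ?_ ?_ ?_ u
  · simpa only [AlgHom.comp_apply, hσ.map_EE, hρ.map_EE, hρ'.map_EE] using semiconjBy_basisSign_PE α
  · simpa only [AlgHom.comp_apply, hσ.map_FF, map_neg, hρ.map_FF, hρ'.map_FF]
      using semiconjBy_basisSign_PF
  · simpa only [AlgHom.comp_apply, hσ.map_KK, map_neg, hρ.map_KK, hρ'.map_KK]
      using semiconjBy_basisSign_PK α

/-- The form `tr H^α_s` of a representation on `P^α(s)`: the trace of its block of coefficients of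
the `a_l` in the images of the `b_i`. -/
def traceH (ρ : Uq p →ₐ[ℂ] Matrix (PIdx p s) (PIdx p s) ℂ) : Uq p →ₗ[ℂ] ℂ :=
  ∑ i : Fin s, (entry (Sum.inr (Sum.inr (Sum.inr i))) (Sum.inl i)).comp ρ.toLinearMap

theorem traceH_apply (ρ : Uq p →ₐ[ℂ] Matrix (PIdx p s) (PIdx p s) ℂ) (u : Uq p) :
    traceH ρ u = ∑ i : Fin s, ρ u (Sum.inr (Sum.inr (Sum.inr i))) (Sum.inl i) := by
  simp only [traceH, LinearMap.sum_apply]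
  rfl

theorem GOf_eq_traceH_add_traceH
    (ρP : (α : ℂ) → (s : ℕ) → (Uq p →ₐ[ℂ] Matrix (PIdx p s) (PIdx p s) ℂ)) (s : ℕ) :
    GOf p ρP s = traceH (ρP 1 s) + traceH (ρP (-1) (p - s)) :=
  rfl

theorem IsProjectiveRep.traceH_comp_signTwist {α : ℂ}
    {ρ ρ' : Uq p →ₐ[ℂ] Matrix (PIdx p s) (PIdx p s) ℂ} (hρ : IsProjectiveRep α ρ)
    (hρ' : IsProjectiveRep (-α) ρ') {σ : Uq p →ₐ[ℂ] Uq p} (hσ : IsSignTwist σ) :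
    traceH ρ ∘ₗ σ.toLinearMap = -traceH ρ' := by
  ext u
  simp only [LinearMap.comp_apply, LinearMap.neg_apply, AlgHom.toLinearMap_apply, traceH_apply,
    ← Finset.sum_neg_distrib]
  refine Finset.sum_congr rfl fun i _ => ?_
  have hentry := semiconjBy_diagonal_iff.1 (hρ.semiconjBy_signTwist hρ' hσ u)
    (Sum.inr (Sum.inr (Sum.inr i))) (Sum.inl i)
  have hsign : ((-1 : ℂ) ^ (i : ℕ)) ≠ 0 := by simp
  apply mul_right_cancel₀ hsign
  simp only [basisSign] at hentry
  linear_combination -hentry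

theorem IsPRep.traceH_comp_signTwist
    {ρP : (α : ℂ) → (s : ℕ) → (Uq p →ₐ[ℂ] Matrix (PIdx p s) (PIdx p s) ℂ)} (hP : IsPRep p ρP)
    {α : ℂ} (hα : α = 1 ∨ α = -1) (h1 : 1 ≤ s) (hs : s ≤ p - 1) {σ : Uq p →ₐ[ℂ] Uq p}
    (hσ : IsSignTwist σ) : traceH (ρP α s) ∘ₗ σ.toLinearMap = -traceH (ρP (-α) s) := by
  have hα' : -α = 1 ∨ -α = -1 := by rcases hα with rfl | rfl <;> simp
  exact (hP.isProjectiveRep hα h1 hs).traceH_comp_signTwist (hP.isProjectiveRep hα' h1 hs) hσ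

end Projective

/-- in `SLF(Ū_q)`, `χ^-_1 G_s = -G_{p-s}` for all `1 ≤ s ≤ p-1`. -/
theorem statement_14 (p : ℕ) (hp : 2 ≤ p)
    (ρX : (α : ℂ) → (s : ℕ) → (Uq p →ₐ[ℂ] Matrix (Fin s) (Fin s) ℂ))
    (hX : IsXRep p ρX)
    (ρP : (α : ℂ) → (s : ℕ) → (Uq p →ₐ[ℂ] Matrix (PIdx p s) (PIdx p s) ℂ))
    (hP : IsPRep p ρP)
    (Δ : Uq p →ₐ[ℂ] (Uq p ⊗[ℂ] Uq p)) (hΔ : IsCoprod p Δ) :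
    ∀ s : ℕ, 1 ≤ s → s ≤ p - 1 →
      conv p Δ (chiOf p (ρX (-1) 1)) (GOf p ρP s) = -GOf p ρP (p - s) := by
  intro s h1 hs
  obtain ⟨hK, hE, hF⟩ := hX (-1) (Or.inr rfl) 1 le_rfl (by lia)
  have hσ : IsSignTwist (leftWinding Δ (charAlgHom (ρX (-1) 1))) :=
    isSignTwist_leftWinding hΔ (by simp [charAlgHom_apply, hE, XE])
      (by simp [charAlgHom_apply, hF, XF]) (by simp [charAlgHom_apply, hK, XK])
  rw [← charAlgHom_toLinearMap, conv_algHom, GOf_eq_traceH_add_traceH, GOf_eq_traceH_add_traceH,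
    Nat.sub_sub_self (by lia), LinearMap.add_comp,
    hP.traceH_comp_signTwist (Or.inl rfl) h1 hs hσ,
    hP.traceH_comp_signTwist (Or.inr rfl) (by lia) (by lia) hσ, neg_neg, neg_add, add_comm]

end Uqsl2
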